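/- arXiv:1211.0414 — 2 statements merged into one kernel-verified Lean document; each statement's English description precedes it below -/
import Mathlib

section
/- Let (H,d) be a Hadamard space and f : H → (−∞,∞] a proper convex lower semicontinuous function that attains its minimum on H. Then for every starting point x in the closure of dom f, the gradient flow S_t x weakly converges, as t → ∞, to a minimizer of f. -/
open Filter Topology
open scoped Classical

/-- `γ`, restricted to `[0,1]`, is an affinely parametrized geodesic. -/
def IsGeodesic {H : Type*} [MetricSpace H] (γ : ℝ → H) : Prop :=
  ∀ s ∈ Set.Icc (0:ℝ) 1, ∀ t ∈ Set.Icc (0:ℝ) 1,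
    dist (γ s) (γ t) = |s - t| * dist (γ 0) (γ 1)

/-- A Hadamard space: a complete geodesic metric space satisfying the CAT(0) inequality. -/
structure HadamardSpace (H : Type*) [MetricSpace H] [CompleteSpace H] : Prop where
  geodesic : ∀ x y : H, ∃ γ : ℝ → H, IsGeodesic γ ∧ γ 0 = x ∧ γ 1 = y
  cat0 : ∀ (x : H) (γ : ℝ → H), IsGeodesic γ → ∀ t ∈ Set.Icc (0:ℝ) 1,
      dist x (γ t) ^ 2 ≤ (1 - t) * dist x (γ 0) ^ 2 + t * dist x (γ 1) ^ 2
        - t * (1 - t) * dist (γ 0) (γ 1) ^ 2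

/-- A set is (geodesically) convex if it contains every geodesic segment between its points. -/
def GeodesicConvex {H : Type*} [MetricSpace H] (C : Set H) : Prop :=
  ∀ γ : ℝ → H, IsGeodesic γ → γ 0 ∈ C → γ 1 ∈ C → ∀ t ∈ Set.Icc (0:ℝ) 1, γ t ∈ C

/-- A function `f : H → (−∞,∞]` is convex if it is convex along every geodesic. -/
def ConvexFun {H : Type*} [MetricSpace H] (f : H → EReal) : Prop :=
  ∀ γ : ℝ → H, IsGeodesic γ → ∀ t ∈ Set.Icc (0:ℝ) 1,
    f (γ t) ≤ ((1 - t : ℝ) : EReal) * f (γ 0) + ((t : ℝ) : EReal) * f (γ 1)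

/-- `f` is strongly convex with parameter `β > 0`. -/
def StronglyConvexWith {H : Type*} [MetricSpace H] (β : ℝ) (f : H → EReal) : Prop :=
  ∀ γ : ℝ → H, IsGeodesic γ → ∀ t ∈ Set.Icc (0:ℝ) 1,
    f (γ t) ≤ ((1 - t : ℝ) : EReal) * f (γ 0) + ((t : ℝ) : EReal) * f (γ 1)
      - ((β * (t * (1 - t)) * dist (γ 0) (γ 1) ^ 2 : ℝ) : EReal)

/-- `f : H → (−∞,∞]` is proper (not identically `∞`, never `−∞`), convex and lsc. -/
def ProperConvexLsc {H : Type*} [MetricSpace H] (f : H → EReal) : Prop :=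
  (∃ x, f x ≠ ⊤) ∧ (∀ x, f x ≠ ⊥) ∧ ConvexFun f ∧ LowerSemicontinuous f

/-- `c` is an asymptotic center of the (bounded) sequence `x`:
it minimizes `y ↦ limsup_n d(y, x_n)²`. -/
def IsAsymptoticCenter {H : Type*} [MetricSpace H] (x : ℕ → H) (c : H) : Prop :=
  ∀ y : H, limsup (fun n => dist c (x n) ^ 2) atTop ≤ limsup (fun n => dist y (x n) ^ 2) atTop

/-- `x` weakly converges to `c` if `c` is the asymptotic center of every subsequence of `x`. -/
def WeakConvSeq {H : Type*} [MetricSpace H] (x : ℕ → H) (c : H) : Prop :=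
  ∀ φ : ℕ → ℕ, StrictMono φ → IsAsymptoticCenter (x ∘ φ) c

/-- Mosco convergence of `fn` to `f`. -/
def MoscoConv {H : Type*} [MetricSpace H] (fn : ℕ → H → EReal) (f : H → EReal) : Prop :=
  (∀ (x : H) (xs : ℕ → H), Bornology.IsBounded (Set.range xs) → WeakConvSeq xs x →
      f x ≤ liminf (fun n => fn n (xs n)) atTop) ∧
  (∀ x : H, ∃ ys : ℕ → H, Tendsto ys atTop (𝓝 x) ∧
      Tendsto (fun n => fn n (ys n)) atTop (𝓝 (f x)))

/-- `p` is the resolvent `J_λ x` of `f` at `x`: it minimizes `y ↦ f(y) + d(x,y)²/(2λ)`. -/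
def IsResolventPt {H : Type*} [MetricSpace H] (f : H → EReal) (lam : ℝ) (x p : H) : Prop :=
  ∀ y : H, f p + ((dist x p ^ 2 / (2 * lam) : ℝ) : EReal)
    ≤ f y + ((dist x y ^ 2 / (2 * lam) : ℝ) : EReal)

/-- The Moreau–Yosida envelope `f_λ(x) = inf_y [f(y) + d(x,y)²/(2λ)]`. -/
noncomputable def MoreauEnv {H : Type*} [MetricSpace H] (f : H → EReal) (lam : ℝ) (x : H) :
    EReal :=
  ⨅ y : H, f y + ((dist x y ^ 2 / (2 * lam) : ℝ) : EReal)

/-- `p` is the metric projection of `x` onto `C`. -/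
def IsProjPt {H : Type*} [MetricSpace H] (C : Set H) (x p : H) : Prop :=
  p ∈ C ∧ ∀ c ∈ C, dist x p ≤ dist x c

/-- The indicator function of a set, with values in `(−∞,∞]`. -/
noncomputable def indicatorE {H : Type*} (C : Set H) : H → EReal :=
  fun x => if x ∈ C then (0 : EReal) else ⊤

/-- `y = S_t x` is the gradient-flow semigroup value:
the limit of the iterated resolvents `(J_{t/n})^{(n)} x`. -/
def IsGradientFlowPt {H : Type*} [MetricSpace H] (J : ℝ → H → H) (t : ℝ) (x y : H) : Prop :=
  Tendsto (fun n : ℕ => (J (t / (n : ℝ)))^[n] x) atTop (𝓝 y)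

section MetricFacts

variable {H : Type*} [MetricSpace H]

/-- A continuous function, bounded below, that satisfies a uniform midpoint
convexity inequality for every pair of points attains its minimum on a complete space. -/
lemma exists_forall_le_of_midpoint_uniformly_convex [CompleteSpace H] [Nonempty H] {ω : H → ℝ}
    (hcont : Continuous ω) (hbdd : BddBelow (Set.range ω))
    (hmid : ∀ a b : H, ∃ c, ω c ≤ ω a / 2 + ω b / 2 - dist a b ^ 2 / 4) :
    ∃ c, ∀ y, ω c ≤ ω y := by
  have hlow : ∀ y, (⨅ z, ω z) ≤ ω y := fun y => ciInf_le hbdd y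
  have hex : ∀ n : ℕ, ∃ y, ω y < (⨅ z, ω z) + 1 / ((n : ℝ) + 1) := fun n =>
    exists_lt_of_ciInf_lt (lt_add_of_pos_right _ (by positivity))
  choose v hv using hex
  have hlim : Tendsto (fun n : ℕ => 1 / ((n : ℝ) + 1)) atTop (𝓝 0) :=
    tendsto_one_div_add_atTop_nhds_zero_nat
  have hdist : ∀ i j, dist (v i) (v j) ^ 2 ≤ 2 * (1 / ((i : ℝ) + 1)) + 2 * (1 / ((j : ℝ) + 1)) := by
    intro i j
    obtain ⟨c, hc⟩ := hmid (v i) (v j)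
    linarith [hlow c, hv i, hv j]
  have hcauchy : CauchySeq v := by
    rw [Metric.cauchySeq_iff]
    intro ε hε
    obtain ⟨N, hN⟩ := eventually_atTop.1 (hlim.eventually_lt_const (by positivity : 0 < ε ^ 2 / 4))
    refine ⟨N, fun i hi j hj => ?_⟩
    refine lt_of_pow_lt_pow_left₀ 2 hε.le ?_
    linarith [hdist i j, hN i hi, hN j hj]
  obtain ⟨c, hc⟩ := cauchySeq_tendsto_of_complete hcauchy
  refine ⟨c, fun y => (?_ : ω c ≤ ⨅ z, ω z).trans (hlow y)⟩
  have hlim' := hlim.const_add (⨅ z, ω z)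
  rw [add_zero] at hlim'
  exact le_of_tendsto_of_tendsto' ((hcont.tendsto c).comp hc) hlim' fun n => (hv n).le

lemma isBoundedUnder_le_dist_sq {u : ℕ → H} (hu : Bornology.IsBounded (Set.range u)) (y : H) :
    IsBoundedUnder (· ≤ ·) atTop fun n => dist y (u n) ^ 2 := by
  obtain ⟨r, hr⟩ := hu.subset_closedBall y
  refine isBoundedUnder_of ⟨r ^ 2, fun n => ?_⟩
  have := hr ⟨n, rfl⟩
  rw [Metric.mem_closedBall, dist_comm] at this
  gcongr

lemma isCoboundedUnder_le_dist_sq (u : ℕ → H) (y : H) :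
    IsCoboundedUnder (· ≤ ·) atTop fun n => dist y (u n) ^ 2 :=
  (isBoundedUnder_of ⟨0, fun _ => by positivity⟩ :
    IsBoundedUnder (· ≥ ·) atTop fun n => dist y (u n) ^ 2).isCoboundedUnder_le

/-- A real bound that holds eventually up to an arbitrary error passes to the upper limit. -/
lemma limsup_dist_sq_le_of_eventually {u : ℕ → H} {y : H} {a : ℝ}
    (h : ∀ ε > 0, ∀ᶠ n in atTop, dist y (u n) ^ 2 ≤ a + ε) :
    limsup (fun n => dist y (u n) ^ 2) atTop ≤ a :=
  le_of_forall_pos_le_add fun ε hε =>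
    limsup_le_of_le (isCoboundedUnder_le_dist_sq u y) (h ε hε)

lemma eventually_dist_sq_le_limsup_add {u : ℕ → H} (hu : Bornology.IsBounded (Set.range u)) (y : H)
    {ε : ℝ} (hε : 0 < ε) :
    ∀ᶠ n in atTop, dist y (u n) ^ 2 ≤ limsup (fun n => dist y (u n) ^ 2) atTop + ε :=
  (eventually_lt_of_limsup_lt (lt_add_of_pos_right _ hε)
    (isBoundedUnder_le_dist_sq hu y)).mono fun _ h => h.le

lemma continuous_limsup_dist_sq {u : ℕ → H} (hu : Bornology.IsBounded (Set.range u)) :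
    Continuous fun y => limsup (fun n => dist y (u n) ^ 2) atTop := by
  rw [continuous_iff_continuousAt]
  intro y
  obtain ⟨r, hr⟩ := hu.subset_closedBall y
  have hr' : ∀ n, dist y (u n) ≤ r := fun n => by
    have := hr ⟨n, rfl⟩
    rwa [Metric.mem_closedBall, dist_comm] at this
  have hr0 : 0 ≤ r := dist_nonneg.trans (hr' 0)
  have key : ∀ z w : H, (∀ n, dist z (u n) ≤ r + dist z w) →
      limsup (fun n => dist w (u n) ^ 2) atTop ≤
        limsup (fun n => dist z (u n) ^ 2) atTop
          + (2 * (r + dist z w) * dist z w + dist z w ^ 2) := by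
    intro z w hz
    refine limsup_dist_sq_le_of_eventually fun ε hε => ?_
    filter_upwards [eventually_dist_sq_le_limsup_add hu z hε] with n hn
    have h1 : dist w (u n) ≤ dist z w + dist z (u n) := dist_triangle_left w (u n) z
    have h2 : dist w (u n) ^ 2 ≤ (dist z w + dist z (u n)) ^ 2 := by gcongr
    nlinarith [mul_le_mul_of_nonneg_right (hz n) (dist_nonneg : 0 ≤ dist z w)]
  have hlim : Tendsto (fun z => 2 * (r + dist z y) * dist z y + dist z y ^ 2) (𝓝 y) (𝓝 0) := by
    have hc : Continuous fun z => 2 * (r + dist z y) * dist z y + dist z y ^ 2 := by fun_prop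
    simpa using hc.tendsto y
  rw [ContinuousAt, tendsto_iff_dist_tendsto_zero]
  refine squeeze_zero (fun _ => dist_nonneg) (fun z => ?_) hlim
  rw [Real.dist_eq, abs_le]
  have h1 := key z y fun n => by linarith [dist_triangle z y (u n), hr' n]
  have h2 := key y z fun n => by linarith [hr' n, dist_nonneg (x := y) (y := z)]
  rw [dist_comm y z] at h2
  constructor <;> linarith

end MetricFacts

namespace HadamardSpace

variable {H : Type*} [MetricSpace H] [CompleteSpace H]

lemma exists_midpoint (hH : HadamardSpace H) (a b : H) :
    ∃ c, ∀ x, dist x c ^ 2 ≤ dist x a ^ 2 / 2 + dist x b ^ 2 / 2 - dist a b ^ 2 / 4 := by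
  obtain ⟨γ, hγ, rfl, rfl⟩ := hH.geodesic a b
  refine ⟨γ (1 / 2), fun x => ?_⟩
  linarith [hH.cat0 x γ hγ (1 / 2) ⟨by norm_num, by norm_num⟩]

/-- The squares of the diagonals of a quadrilateral add up to at most the squares of its sides. -/
lemma quadrilateral (hH : HadamardSpace H) (x y p q : H) :
    dist x q ^ 2 + dist y p ^ 2 ≤
      dist x p ^ 2 + dist y q ^ 2 + dist x y ^ 2 + dist p q ^ 2 := by
  obtain ⟨c, hc⟩ := hH.exists_midpoint x q
  have hy := hc y
  have hp := hc p
  have htri : dist y p ≤ dist y c + dist p c := dist_triangle_right y p c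
  have hsq : dist y p ^ 2 ≤ (dist y c + dist p c) ^ 2 := by gcongr
  rw [dist_comm y x] at hy
  rw [dist_comm p x] at hp
  nlinarith [sq_nonneg (dist y c - dist p c)]

/-- Every bounded sequence has an asymptotic center. -/
lemma exists_isAsymptoticCenter (hH : HadamardSpace H) {u : ℕ → H}
    (hu : Bornology.IsBounded (Set.range u)) : ∃ c, IsAsymptoticCenter u c := by
  have : Nonempty H := ⟨u 0⟩
  refine exists_forall_le_of_midpoint_uniformly_convex (continuous_limsup_dist_sq hu) ?_ ?_
  · refine ⟨0, ?_⟩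
    rintro _ ⟨y, rfl⟩
    exact le_limsup_of_frequently_le (Frequently.of_forall fun n => by positivity)
      (isBoundedUnder_le_dist_sq hu y)
  · intro a b
    obtain ⟨c, hc⟩ := hH.exists_midpoint a b
    refine ⟨c, limsup_dist_sq_le_of_eventually fun ε hε => ?_⟩
    filter_upwards [eventually_dist_sq_le_limsup_add hu a hε,
      eventually_dist_sq_le_limsup_add hu b hε] with n ha hb
    have := hc (u n)
    rw [dist_comm _ c, dist_comm _ a, dist_comm _ b] at this
    linarith

end HadamardSpace

/-- `J` satisfies the discrete evolution variational inequality for the nonnegative real-valued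
function `g` with domain `D`. -/
structure IsEviResolvent {H : Type*} [MetricSpace H] (D : Set H) (g : H → ℝ) (J : ℝ → H → H) :
    Prop where
  mem : ∀ l > (0:ℝ), ∀ x, J l x ∈ D
  nonneg : ∀ y ∈ D, 0 ≤ g y
  evi : ∀ l > (0:ℝ), ∀ x, ∀ y ∈ D,
    dist (J l x) y ^ 2 + dist x (J l x) ^ 2 + 2 * l * (g (J l x) - g y) ≤ dist x y ^ 2

namespace IsEviResolvent

variable {H : Type*} [MetricSpace H] {D : Set H} {g : H → ℝ} {J : ℝ → H → H}

lemma apply_le (h : IsEviResolvent D g J) {l : ℝ} (hl : 0 < l) {x : H} (hx : x ∈ D) :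
    g (J l x) ≤ g x := by
  have := h.evi l hl x x hx
  rw [dist_self] at this
  by_contra! hlt
  nlinarith [sq_nonneg (dist (J l x) x), sq_nonneg (dist x (J l x)),
    mul_pos hl (sub_pos.2 hlt)]

lemma iterate_mem (h : IsEviResolvent D g J) {l : ℝ} (hl : 0 < l) {x : H} (hx : x ∈ D) (k : ℕ) :
    (J l)^[k] x ∈ D := by
  cases k with
  | zero => exact hx
  | succ k =>
    rw [Function.iterate_succ_apply']
    exact h.mem l hl _

lemma iterate_le (h : IsEviResolvent D g J) {l : ℝ} (hl : 0 < l) {x : H} (hx : x ∈ D) (k : ℕ) :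
    g ((J l)^[k] x) ≤ g x := by
  induction k with
  | zero => exact le_rfl
  | succ k ih =>
    rw [Function.iterate_succ_apply']
    exact (h.apply_le hl (h.iterate_mem hl hx k)).trans ih

lemma evi_iterate (h : IsEviResolvent D g J) {l : ℝ} (hl : 0 < l) (x : H) {y : H} (hy : y ∈ D)
    (k : ℕ) :
    dist ((J l)^[k] x) y ^ 2 + 2 * (k * l) * (g ((J l)^[k] x) - g y) ≤ dist x y ^ 2 := by
  induction k with
  | zero => simp
  | succ k ih =>
    have hstep := h.evi l hl ((J l)^[k] x) y hy
    have hmono : (k : ℝ) * l * g (J l ((J l)^[k] x)) ≤ k * l * g ((J l)^[k] x) := by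
      rcases Nat.eq_zero_or_pos k with rfl | hk
      · simp
      · refine mul_le_mul_of_nonneg_left (h.apply_le hl ?_) (by positivity)
        obtain ⟨j, rfl⟩ := Nat.exists_eq_succ_of_ne_zero hk.ne'
        rw [Function.iterate_succ_apply']
        exact h.mem l hl _
    rw [Function.iterate_succ_apply']
    push_cast
    nlinarith [sq_nonneg (dist ((J l)^[k] x) (J l ((J l)^[k] x)))]

/-- Two discretizations of the flow, one of which performs `M` steps for every step of the other,
stay close to each other. -/
lemma dist_iterate_sq_le (h : IsEviResolvent D g J) {l l' : ℝ} (hl : 0 < l) (hl' : 0 < l') {x : H}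
    (hx : x ∈ D) (M k : ℕ) :
    dist ((J l)^[k] x) ((J l')^[M * k] x) ^ 2 ≤
      2 * l * g x + 2 * (k * |l - M * l'|) * g x := by
  have key : dist ((J l)^[k] x) ((J l')^[M * k] x) ^ 2 ≤
      2 * l * (g x - g ((J l)^[k] x)) + 2 * (k * |l - M * l'|) * g x := by
    induction k with
    | zero => simp
    | succ k ih =>
      have hX := h.iterate_mem hl hx k
      have hXle := h.iterate_le hl hx k
      have hYmem := h.iterate_mem hl' hx (M + M * k)
      have hYle := h.iterate_le hl' hx (M + M * k)
      rw [Nat.mul_succ, add_comm (M * k) M, Function.iterate_succ_apply']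
      rw [Function.iterate_add_apply] at hYmem hYle ⊢
      set X := (J l)^[k] x
      set Y := (J l')^[M * k] x
      have hYX := h.evi_iterate hl' Y hX M
      set Y' := (J l')^[M] Y
      have hXY := h.evi l hl X Y' hYmem
      have hX0 := h.nonneg X hX
      have hY0 := h.nonneg Y' hYmem
      have habs : (l - M * l') * (g Y' - g X) ≤ |l - M * l'| * g x := by
        refine (le_abs_self _).trans ?_
        rw [abs_mul]
        exact mul_le_mul_of_nonneg_left (abs_le.2 ⟨by linarith, by linarith⟩) (abs_nonneg _)
      rw [dist_comm Y' X, dist_comm Y X] at hYX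
      push_cast
      nlinarith [sq_nonneg (dist X (J l X))]
  have := h.nonneg _ (h.iterate_mem hl hx k)
  nlinarith [mul_nonneg hl.le this]

lemma nonexpansive [CompleteSpace H] (hH : HadamardSpace H) (h : IsEviResolvent D g J) {l : ℝ}
    (hl : 0 < l) (x y : H) : dist (J l x) (J l y) ≤ dist x y := by
  have h1 := h.evi l hl x _ (h.mem l hl y)
  have h2 := h.evi l hl y _ (h.mem l hl x)
  have h3 := hH.quadrilateral x y (J l x) (J l y)
  rw [dist_comm (J l y)] at h2
  refine le_of_sq_le_sq ?_ dist_nonneg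
  linarith

lemma dist_iterate_iterate_le [CompleteSpace H] (hH : HadamardSpace H) (h : IsEviResolvent D g J)
    {l : ℝ} (hl : 0 < l) (x y : H) (k : ℕ) :
    dist ((J l)^[k] x) ((J l)^[k] y) ≤ dist x y := by
  induction k with
  | zero => exact le_rfl
  | succ k ih =>
    rw [Function.iterate_succ_apply', Function.iterate_succ_apply']
    exact (h.nonexpansive hH hl _ _).trans ih

lemma dist_iterate_minimizer_le (h : IsEviResolvent D g J) {l : ℝ} (hl : 0 < l) (x : H) {m : H}
    (hm : m ∈ D) (hm0 : g m = 0) (k : ℕ) : dist ((J l)^[k] x) m ≤ dist x m := by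
  refine le_of_sq_le_sq ?_ dist_nonneg
  have := h.evi_iterate hl x hm k
  rcases Nat.eq_zero_or_pos k with rfl | hk
  · simp
  · obtain ⟨j, rfl⟩ := Nat.exists_eq_succ_of_ne_zero hk.ne'
    have hmem : (J l)^[j + 1] x ∈ D := by
      rw [Function.iterate_succ_apply']
      exact h.mem l hl _
    have hpos : 0 ≤ 2 * (((j + 1 : ℕ) : ℝ) * l) * (g ((J l)^[j + 1] x) - g m) := by
      rw [hm0, sub_zero]
      exact mul_nonneg (by positivity) (h.nonneg _ hmem)
    linarith

lemma cauchySeq_iterate_of_mem (h : IsEviResolvent D g J) {t : ℝ} (ht : 0 < t) {x : H}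
    (hx : x ∈ D) : CauchySeq fun n : ℕ => (J (t / (n : ℝ)))^[n] x := by
  have hlim : Tendsto (fun n : ℕ => 2 * g x * (t / (n : ℝ))) atTop (𝓝 0) := by
    simpa using (tendsto_const_div_atTop_nhds_zero_nat t).const_mul (2 * g x)
  have hrefine : ∀ n M : ℕ, 0 < n → 0 < M →
      dist ((J (t / (n : ℝ)))^[n] x) ((J (t / ((M * n : ℕ) : ℝ)))^[M * n] x) ^ 2 ≤
        2 * g x * (t / (n : ℝ)) := by
    intro n M hn hM
    have hn' : (0 : ℝ) < n := Nat.cast_pos.2 hn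
    have hM' : (0 : ℝ) < M := Nat.cast_pos.2 hM
    have := h.dist_iterate_sq_le (l := t / (n : ℝ)) (l' := t / ((M * n : ℕ) : ℝ)) (by positivity)
      (by positivity) hx M n
    have h0 : t / (n : ℝ) - M * (t / ((M * n : ℕ) : ℝ)) = 0 := by
      push_cast
      field_simp
      ring
    rw [h0] at this
    simp only [abs_zero, mul_zero, zero_mul, add_zero] at this
    linarith
  rw [Metric.cauchySeq_iff]
  intro ε hε
  obtain ⟨N, hN⟩ := eventually_atTop.1 (hlim.eventually_lt_const (by positivity : 0 < (ε / 2) ^ 2))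
  have hclose : ∀ n M : ℕ, max N 1 ≤ n → 0 < M →
      dist ((J (t / (n : ℝ)))^[n] x) ((J (t / ((M * n : ℕ) : ℝ)))^[M * n] x) < ε / 2 := by
    intro n M hn hM
    refine lt_of_pow_lt_pow_left₀ 2 (by positivity) ?_
    exact (hrefine n M (by omega) hM).trans_lt (hN n (by omega))
  refine ⟨max N 1, fun i hi j hj => ?_⟩
  have h1 := hclose i j hi (by omega)
  have h2 := hclose j i hj (by omega)
  rw [mul_comm i j] at h2
  linarith [dist_triangle_right ((J (t / (i : ℝ)))^[i] x) ((J (t / (j : ℝ)))^[j] x)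
    ((J (t / ((j * i : ℕ) : ℝ)))^[j * i] x)]

/-- The exponential formula converges for every starting point in the closure of the domain. -/
lemma exists_isGradientFlowPt [CompleteSpace H] (hH : HadamardSpace H) (h : IsEviResolvent D g J)
    {t : ℝ} (ht : 0 < t) {x : H} (hx : x ∈ closure D) : ∃ y, IsGradientFlowPt J t x y := by
  refine cauchySeq_tendsto_of_complete ?_
  rw [Metric.cauchySeq_iff]
  intro ε hε
  obtain ⟨x', hx', hxx'⟩ := Metric.mem_closure_iff.1 hx (ε / 4) (by positivity)
  obtain ⟨N, hN⟩ := Metric.cauchySeq_iff.1 (h.cauchySeq_iterate_of_mem ht hx') (ε / 2)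
    (by positivity)
  refine ⟨max N 1, fun i hi j hj => ?_⟩
  have hi0 : (0 : ℝ) < i := Nat.cast_pos.2 (by omega)
  have hj0 : (0 : ℝ) < j := Nat.cast_pos.2 (by omega)
  have h1 := h.dist_iterate_iterate_le hH (div_pos ht hi0) x x' i
  have h2 := h.dist_iterate_iterate_le hH (div_pos ht hj0) x x' j
  have h3 := hN i (by omega) j (by omega)
  rw [dist_comm] at h2
  have h4 := dist_triangle4 ((J (t / (i : ℝ)))^[i] x) ((J (t / (i : ℝ)))^[i] x')
    ((J (t / (j : ℝ)))^[j] x') ((J (t / (j : ℝ)))^[j] x)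
  linarith

lemma dist_flow_flow_le [CompleteSpace H] (hH : HadamardSpace H) (h : IsEviResolvent D g J)
    {t : ℝ} (ht : 0 < t) {x x' y y' : H} (hy : IsGradientFlowPt J t x y)
    (hy' : IsGradientFlowPt J t x' y') : dist y y' ≤ dist x x' := by
  refine le_of_tendsto (hy.dist hy') ?_
  filter_upwards [eventually_gt_atTop 0] with n hn
  exact h.dist_iterate_iterate_le hH (div_pos ht (Nat.cast_pos.2 hn)) x x' n

lemma dist_flow_minimizer_le (h : IsEviResolvent D g J) {t : ℝ} (ht : 0 < t) {x y m : H}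
    (hy : IsGradientFlowPt J t x y) (hm : m ∈ D) (hm0 : g m = 0) : dist y m ≤ dist x m := by
  refine le_of_tendsto (hy.dist tendsto_const_nhds) ?_
  filter_upwards [eventually_gt_atTop 0] with n hn
  exact h.dist_iterate_minimizer_le (div_pos ht (Nat.cast_pos.2 hn)) x hm hm0 n

/-- Along the flow from a point of the domain, the distance to a minimizer decreases. -/
lemma dist_flow_minimizer_anti_of_mem (h : IsEviResolvent D g J) {s t : ℝ} (hs : 0 < s)
    (hst : s ≤ t) {x y z m : H} (hx : x ∈ D) (hy : IsGradientFlowPt J s x y)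
    (hz : IsGradientFlowPt J t x z) (hm : m ∈ D) (hm0 : g m = 0) : dist z m ≤ dist y m := by
  have ht : 0 < t := hs.trans_le hst
  let k : ℕ → ℕ := fun n => ⌊(n : ℝ) * (s / t)⌋₊
  have hk : Tendsto k atTop atTop :=
    tendsto_nat_floor_atTop.comp
      (tendsto_natCast_atTop_atTop.atTop_mul_const (div_pos hs ht))
  have herr : Tendsto (fun n : ℕ => √(4 * g x * (t / (n : ℝ)))) atTop (𝓝 0) := by
    have := ((tendsto_const_div_atTop_nhds_zero_nat t).const_mul (4 * g x)).sqrt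
    simpa using this
  have hright := ((hy.comp hk).dist (tendsto_const_nhds (x := m))).add herr
  rw [add_zero] at hright
  refine le_of_tendsto_of_tendsto (hz.dist (tendsto_const_nhds (x := m))) hright ?_
  filter_upwards [eventually_gt_atTop 0, hk.eventually_gt_atTop 0] with n hn hkn
  have hn' : (0 : ℝ) < n := Nat.cast_pos.2 hn
  have hkn' : (0 : ℝ) < k n := Nat.cast_pos.2 hkn
  have hl : 0 < t / (n : ℝ) := div_pos ht hn'
  have hfloor_le : (k n : ℝ) ≤ n * (s / t) := Nat.floor_le (by positivity)
  have hlt_floor : n * (s / t) < (k n : ℝ) + 1 := Nat.lt_floor_add_one _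
  have hkle : k n ≤ n := by
    have : (k n : ℝ) ≤ n := hfloor_le.trans
      (mul_le_of_le_one_right hn'.le ((div_le_one ht).2 hst))
    exact_mod_cast this
  have hnst : (n : ℝ) * (s / t) * (t / n) = s := by field_simp
  have hgrid : (k n : ℝ) * |t / (n : ℝ) - (1 : ℕ) * (s / (k n : ℝ))| ≤ t / n := by
    rw [← abs_of_pos hkn', ← abs_mul, abs_of_pos hkn']
    have : (k n : ℝ) * (t / (n : ℝ) - (1 : ℕ) * (s / (k n : ℝ))) = k n * (t / n) - s := by
      push_cast
      field_simp
    rw [this, abs_le]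
    constructor <;> nlinarith
  have hcomp := h.dist_iterate_sq_le hl (div_pos hs hkn') hx 1 (k n)
  rw [one_mul] at hcomp
  have hclose : dist ((J (t / (n : ℝ)))^[k n] x) ((J (s / (k n : ℝ)))^[k n] x) ≤
      √(4 * g x * (t / (n : ℝ))) := by
    refine Real.le_sqrt_of_sq_le (hcomp.trans ?_)
    nlinarith [mul_le_mul_of_nonneg_right hgrid (h.nonneg x hx)]
  have hdecr : dist ((J (t / (n : ℝ)))^[n] x) m ≤ dist ((J (t / (n : ℝ)))^[k n] x) m := by
    have := h.dist_iterate_minimizer_le hl ((J (t / (n : ℝ)))^[k n] x) hm hm0 (n - k n)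
    rwa [← Function.iterate_add_apply, Nat.sub_add_cancel hkle] at this
  have htri := dist_triangle ((J (t / (n : ℝ)))^[k n] x) ((J (s / (k n : ℝ)))^[k n] x) m
  simp only [Function.comp_apply]
  linarith

/-- Along the flow, the distance to a minimizer decreases. -/
lemma dist_flow_minimizer_anti [CompleteSpace H] (hH : HadamardSpace H) (h : IsEviResolvent D g J)
    {s t : ℝ} (hs : 0 < s) (hst : s ≤ t) {x y z m : H} (hx : x ∈ closure D)
    (hy : IsGradientFlowPt J s x y) (hz : IsGradientFlowPt J t x z) (hm : m ∈ D) (hm0 : g m = 0) :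
    dist z m ≤ dist y m := by
  refine le_of_forall_pos_le_add fun ε hε => ?_
  have ht : 0 < t := hs.trans_le hst
  obtain ⟨x', hx', hxx'⟩ := Metric.mem_closure_iff.1 hx (ε / 2) (by positivity)
  obtain ⟨y', hy'⟩ := h.exists_isGradientFlowPt hH hs (subset_closure hx')
  obtain ⟨z', hz'⟩ := h.exists_isGradientFlowPt hH ht (subset_closure hx')
  have h1 := h.dist_flow_flow_le hH hs hy hy'
  have h2 := h.dist_flow_flow_le hH ht hz hz'
  have h3 := h.dist_flow_minimizer_anti_of_mem hs hst hx' hy' hz' hm hm0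
  rw [dist_comm y y'] at h1
  linarith [dist_triangle z z' m, dist_triangle y' y m]

/-- The flow decreases the function to its minimum at the rate `1 / t`. -/
lemma flow_mem_sublevel (h : IsEviResolvent D g J) (hclosed : ∀ a, IsClosed {y | y ∈ D ∧ g y ≤ a})
    {t : ℝ} (ht : 0 < t) {x y m : H} (hy : IsGradientFlowPt J t x y) (hm : m ∈ D)
    (hm0 : g m = 0) : y ∈ D ∧ g y ≤ dist x m ^ 2 / (2 * t) := by
  refine (hclosed (dist x m ^ 2 / (2 * t))).mem_of_tendsto hy ?_
  filter_upwards [eventually_gt_atTop 0] with n hn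
  have hn' : (0 : ℝ) < n := Nat.cast_pos.2 hn
  have hevi := h.evi_iterate (div_pos ht hn') x hm n
  refine ⟨?_, ?_⟩
  · obtain ⟨j, rfl⟩ := Nat.exists_eq_succ_of_ne_zero hn.ne'
    rw [Function.iterate_succ_apply']
    exact h.mem _ (div_pos ht hn') _
  · rw [mul_div_cancel₀ t hn'.ne', hm0] at hevi
    rw [le_div_iff₀ (by positivity)]
    linarith [sq_nonneg (dist ((J (t / (n : ℝ)))^[n] x) m)]

/-- The asymptotic center of a bounded minimizing sequence is a minimizer. -/
lemma asymptoticCenter_mem (h : IsEviResolvent D g J) {u : ℕ → H}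
    (hu : Bornology.IsBounded (Set.range u)) (huD : ∀ n, u n ∈ D)
    (hg : Tendsto (fun n => g (u n)) atTop (𝓝 0)) {c : H} (hc : IsAsymptoticCenter u c) :
    c ∈ D ∧ g c = 0 := by
  have hp := h.mem 1 one_pos c
  have hp0 := h.nonneg _ hp
  have hle : limsup (fun n => dist (J 1 c) (u n) ^ 2) atTop ≤
      limsup (fun n => dist c (u n) ^ 2) atTop - dist c (J 1 c) ^ 2 - 2 * g (J 1 c) := by
    refine limsup_dist_sq_le_of_eventually fun ε hε => ?_
    filter_upwards [eventually_dist_sq_le_limsup_add hu c (half_pos hε),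
      hg.eventually_lt_const (by positivity : 0 < ε / 4)] with n h1 h2
    linarith [h.evi 1 one_pos c (u n) (huD n)]
  have hsq := sq_nonneg (dist c (J 1 c))
  have hcp := hc (J 1 c)
  have hdist : dist c (J 1 c) = 0 := pow_eq_zero_iff two_ne_zero |>.1 (by linarith)
  rw [dist_eq_zero] at hdist
  rw [hdist]
  exact ⟨hp, by linarith⟩

end IsEviResolvent

lemma IsResolventPt.ne_top {H : Type*} [MetricSpace H] {f : H → EReal} {l : ℝ} {x p m : H}
    (h : IsResolventPt f l x p) (hm : f m ≠ ⊤) : f p ≠ ⊤ := fun htop => by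
  have hle := h m
  rw [htop, EReal.top_add_coe, top_le_iff] at hle
  exact EReal.add_ne_top hm (EReal.coe_ne_top _) hle

/-- On a Hadamard space, the resolvents of a proper convex function with a minimizer satisfy the
discrete evolution variational inequality. -/
lemma HadamardSpace.isEviResolvent {H : Type*} [MetricSpace H] [CompleteSpace H]
    (hH : HadamardSpace H) {f : H → EReal} (hbot : ∀ x, f x ≠ ⊥) (hconv : ConvexFun f) {m : H}
    (hm : ∀ y, f m ≤ f y) (hmtop : f m ≠ ⊤) {J : ℝ → H → H}
    (hJ : ∀ lam > (0:ℝ), ∀ x : H, IsResolventPt f lam x (J lam x)) :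
    IsEviResolvent {y | f y ≠ ⊤} (fun y => (f y).toReal - (f m).toReal) J where
  mem l hl x := (hJ l hl x).ne_top hmtop
  nonneg y hy := sub_nonneg.2 (EReal.toReal_le_toReal (hm y) (hbot m) hy)
  evi l hl x y hy := by
    have hptop : f (J l x) ≠ ⊤ := (hJ l hl x).ne_top hmtop
    set p := J l x with hp
    obtain ⟨γ, hγ, hγ0, hγ1⟩ := hH.geodesic p y
    have hfp : f p = ((f p).toReal : EReal) := (EReal.coe_toReal hptop (hbot p)).symm
    have hfy : f y = ((f y).toReal : EReal) := (EReal.coe_toReal hy (hbot y)).symm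
    set a := (f p).toReal
    set b := (f y).toReal
    have hseg : ∀ τ : ℝ, 0 < τ → τ ≤ 1 → (1 - τ) * dist p y ^ 2 ≤
        dist x y ^ 2 - dist x p ^ 2 - 2 * l * (a - b) := by
      intro τ hτ hτ1
      have h1 := hJ l hl x (γ τ)
      have h2 := hconv γ hγ τ ⟨hτ.le, hτ1⟩
      have h3 := hH.cat0 x γ hγ τ ⟨hτ.le, hτ1⟩
      rw [hγ0, hγ1, hfp, hfy] at h2
      rw [hγ0, hγ1] at h3
      have h4 := h1.trans (add_le_add_left h2 _)
      rw [← hp, hfp] at h4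
      norm_cast at h4
      have h5 : 2 * l * a + dist x p ^ 2 ≤
          2 * l * ((1 - τ) * a + τ * b) + dist x (γ τ) ^ 2 := by
        have := mul_le_mul_of_nonneg_left h4 (by positivity : 0 ≤ 2 * l)
        rwa [mul_add, mul_add, mul_div_cancel₀ _ (by positivity),
          mul_div_cancel₀ _ (by positivity)] at this
      have h6 : τ * ((1 - τ) * dist p y ^ 2) ≤
          τ * (dist x y ^ 2 - dist x p ^ 2 - 2 * l * (a - b)) := by
        linarith
      exact le_of_mul_le_mul_left h6 hτ
    have hlim : dist p y ^ 2 ≤ dist x y ^ 2 - dist x p ^ 2 - 2 * l * (a - b) := by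
      have htend : Tendsto (fun τ : ℝ => (1 - τ) * dist p y ^ 2) (𝓝[>] 0) (𝓝 (dist p y ^ 2)) := by
        have hc : Continuous fun τ : ℝ => (1 - τ) * dist p y ^ 2 := by fun_prop
        simpa using (hc.tendsto 0).mono_left nhdsWithin_le_nhds
      refine le_of_tendsto htend ?_
      filter_upwards [Ioc_mem_nhdsGT one_pos] with τ hτ using hseg τ hτ.1 hτ.2
    linarith

/-- Sublevel sets of a lower semicontinuous function, described through its real values. -/
lemma LowerSemicontinuous.isClosed_toReal_sublevel {H : Type*} [TopologicalSpace H]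
    {f : H → EReal} (hf : LowerSemicontinuous f) (hbot : ∀ x, f x ≠ ⊥) (b a : ℝ) :
    IsClosed {y | y ∈ {y | f y ≠ ⊤} ∧ (f y).toReal - b ≤ a} := by
  convert hf.isClosed_preimage ((a + b : ℝ) : EReal) using 1
  ext y
  simp only [Set.mem_ofPred_eq, Set.mem_preimage, Set.mem_Iic]
  constructor
  · rintro ⟨htop, hle⟩
    rw [← EReal.coe_toReal htop (hbot y), EReal.coe_le_coe_iff]
    linarith
  · intro hle
    have htop : f y ≠ ⊤ := (hle.trans_lt (EReal.coe_lt_top _)).ne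
    rw [← EReal.coe_toReal htop (hbot y), EReal.coe_le_coe_iff] at hle
    exact ⟨htop, by linarith⟩

/-- If a proper convex lsc function on a Hadamard space attains its minimum,
then for every starting point in the closure of its domain the gradient flow weakly converges,
as `t → ∞`, to a minimizer of `f`. -/
theorem gradient_flow_weak_convergence
    {H : Type*} [MetricSpace H] [CompleteSpace H] (hH : HadamardSpace H)
    (f : H → EReal) (hf : ProperConvexLsc f)
    (hmin : ∃ m : H, ∀ y : H, f m ≤ f y)
    (J : ℝ → H → H) (hJ : ∀ lam > (0:ℝ), ∀ x : H, IsResolventPt f lam x (J lam x))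
    (S : ℝ → H → H) (hS : ∀ t > (0:ℝ), ∀ x y : H, IsGradientFlowPt J t x y → S t x = y)
    (x : H) (hx : x ∈ closure {y : H | f y ≠ ⊤}) :
    ∃ m : H, (∀ y : H, f m ≤ f y) ∧
      ∀ ts : ℕ → ℝ, (∀ n, 0 < ts n) → Tendsto ts atTop atTop →
        Bornology.IsBounded (Set.range fun n => S (ts n) x) ∧
        WeakConvSeq (fun n => S (ts n) x) m := by
  obtain ⟨⟨x₀, hx₀⟩, hbot, hconv, hlsc⟩ := hf
  obtain ⟨m, hm⟩ := hmin
  have hmtop : f m ≠ ⊤ := ((hm x₀).trans_lt (lt_top_iff_ne_top.2 hx₀)).ne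
  have hE := hH.isEviResolvent hbot hconv hm hmtop hJ
  have hclosed := hlsc.isClosed_toReal_sublevel hbot (f m).toReal
  set g : H → ℝ := fun y => (f y).toReal - (f m).toReal
  set D : Set H := {y | f y ≠ ⊤}
  have hgm : g m = 0 := sub_self _
  have hflow : ∀ t > 0, IsGradientFlowPt J t x (S t x) := fun t ht => by
    obtain ⟨y, hy⟩ := hE.exists_isGradientFlowPt hH ht hx
    rwa [hS t ht x y hy]
  have hbdd : ∀ ts : ℕ → ℝ, (∀ n, 0 < ts n) →
      Bornology.IsBounded (Set.range fun n => S (ts n) x) := fun ts hts => by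
    refine (Metric.isBounded_closedBall (x := m) (r := dist x m)).subset ?_
    rintro _ ⟨n, rfl⟩
    exact hE.dist_flow_minimizer_le (hts n) (hflow _ (hts n)) hmtop hgm
  have hcenter : ∀ ts : ℕ → ℝ, (∀ n, 0 < ts n) → Tendsto ts atTop atTop → ∀ c,
      IsAsymptoticCenter (fun n => S (ts n) x) c → c ∈ D ∧ g c = 0 := by
    intro ts hts htop c hc
    have hmem := fun n => hE.flow_mem_sublevel hclosed (hts n) (hflow _ (hts n)) hmtop hgm
    refine hE.asymptoticCenter_mem (hbdd ts hts) (fun n => (hmem n).1) ?_ hc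
    exact squeeze_zero (fun n => hE.nonneg _ (hmem n).1) (fun n => (hmem n).2)
      ((htop.const_mul_atTop two_pos).const_div_atTop _)
  have hlimsup : ∀ z ∈ D, g z = 0 → ∃ L, ∀ ts : ℕ → ℝ, (∀ n, 0 < ts n) → Tendsto ts atTop atTop →
      limsup (fun n => dist z (S (ts n) x) ^ 2) atTop = L := by
    intro z hz hz0
    have hanti : Antitone fun t : ℝ => dist z (S (max t 1) x) := fun s t hst => by
      have hs : 0 < max s 1 := lt_max_of_lt_right one_pos
      have hst' : max s 1 ≤ max t 1 := max_le_max_right 1 hst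
      simp only [dist_comm z]
      exact hE.dist_flow_minimizer_anti hH hs hst' hx (hflow _ hs) (hflow _ (hs.trans_le hst'))
        hz hz0
    have hlim := tendsto_atTop_ciInf hanti ⟨0, by rintro _ ⟨t, rfl⟩; exact dist_nonneg⟩
    refine ⟨_, fun ts _ htop => (((hlim.comp htop).pow 2).congr' ?_).limsup_eq⟩
    filter_upwards [htop.eventually_ge_atTop 1] with n hn
    simp only [Function.comp_apply, max_eq_left hn]
  have hpos : ∀ n : ℕ, (0 : ℝ) < (n : ℝ) + 1 := fun n => by positivity
  have htend : Tendsto (fun n : ℕ => (n : ℝ) + 1) atTop atTop :=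
    tendsto_atTop_add_const_right _ _ tendsto_natCast_atTop_atTop
  obtain ⟨c, hc⟩ := hH.exists_isAsymptoticCenter (hbdd _ hpos)
  obtain ⟨hcD, hc0⟩ := hcenter _ hpos htend c hc
  obtain ⟨L, hL⟩ := hlimsup c hcD hc0
  refine ⟨c, fun y => ?_, fun ts hts htop => ⟨hbdd ts hts, fun φ hφ y => ?_⟩⟩
  · have hfc : f c = f m := by
      rw [← EReal.coe_toReal hcD (hbot c), ← EReal.coe_toReal hmtop (hbot m), sub_eq_zero.1 hc0]
    exact hfc ▸ hm y
  · have hts' : ∀ n, 0 < ts (φ n) := fun n => hts _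
    have htop' : Tendsto (fun n => ts (φ n)) atTop atTop := htop.comp hφ.tendsto_atTop
    obtain ⟨c', hc'⟩ := hH.exists_isAsymptoticCenter (hbdd _ hts')
    obtain ⟨hcD', hc0'⟩ := hcenter _ hts' htop' c' hc'
    obtain ⟨L', hL'⟩ := hlimsup c' hcD' hc0'
    calc limsup (fun n => dist c (S (ts (φ n)) x) ^ 2) atTop
        = limsup (fun n : ℕ => dist c (S ((n : ℝ) + 1) x) ^ 2) atTop := by
          rw [hL _ hts' htop', hL _ hpos htend]
      _ ≤ limsup (fun n : ℕ => dist c' (S ((n : ℝ) + 1) x) ^ 2) atTop := hc c'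
      _ = limsup (fun n => dist c' (S (ts (φ n)) x) ^ 2) atTop := by
          rw [hL' _ hts' htop', hL' _ hpos htend]
      _ ≤ limsup (fun n => dist y (S (ts (φ n)) x) ^ 2) atTop := hc' y
end

section
/- Let (H,d) be a Hadamard space, let (H^n,d^n) (n ∈ ℕ) be a sequence of Hadamard spaces, and suppose an asymptotic relation between (H^n) and H is given. Let f : H → (−∞,∞] and f^n : H^n → (−∞,∞] (n ∈ ℕ) be proper convex lower semicontinuous functions. Fix x ∈ H and choose x_n ∈ H^n with x_n → x in the asymptotic relation. If f^n → f in the sense of Mosco, then for every λ > 0: f^n_λ(x_n) → f_λ(x), and J^n_λ(x_n) → J_λ(x) in the asymptotic relation, where f_λ, f^n_λ are the Moreau–Yosida envelopes and J_λ, J^n_λ the resolvents of f and f^n. -/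
open Filter Topology
open scoped Classical

section AsymptoticRelation

variable {X : ℕ → Type*} {Y : Type*}

/-- Convergence of a sequence `x n ∈ X n` to `y ∈ Y` inside the disjoint union
`(⊔ₙ Xₙ) ⊔ Y` equipped with a topology `τ`. -/
def SumConv (τ : TopologicalSpace ((Σ n, X n) ⊕ Y)) (x : ∀ n, X n) (y : Y) : Prop :=
  Tendsto (fun n => (Sum.inl ⟨n, x n⟩ : (Σ n, X n) ⊕ Y)) atTop (@nhds _ τ (Sum.inr y))

/-- An asymptotic relation between a sequence of metric spaces `X n` and a metric space `Y`:
a topology on the disjoint union `(⊔ₙ Xₙ) ⊔ Y` satisfying (A1)–(A4). -/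
structure AsymptoticRelation (X : ℕ → Type*) [∀ n, MetricSpace (X n)]
    (Y : Type*) [MetricSpace Y] where
  /-- The topology on the disjoint union. -/
  top : TopologicalSpace ((Σ n, X n) ⊕ Y)
  /-- (A1) Each `X n` is closed in the union and keeps its original topology. -/
  closedEmbedding_piece : ∀ n : ℕ,
    @IsClosedEmbedding (X n) _ _ top (fun x => Sum.inl ⟨n, x⟩)
  /-- (A1) `Y` is closed in the union and keeps its original topology. -/
  closedEmbedding_limit : @IsClosedEmbedding Y _ _ top Sum.inr
  /-- (A2) Every point of `Y` is a limit of a sequence `x n ∈ X n`. -/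
  exists_approx : ∀ y : Y, ∃ x : ∀ n, X n, SumConv top x y
  /-- (A3) Distances converge along convergent sequences. -/
  dist_conv : ∀ (x x' : ∀ n, X n) (y y' : Y), SumConv top x y → SumConv top x' y' →
    Tendsto (fun n => dist (x n) (x' n)) atTop (𝓝 (dist y y'))
  /-- (A4) Perturbations by vanishing distances preserve limits. -/
  conv_of_dist_tendsto_zero : ∀ (x x' : ∀ n, X n) (y : Y), SumConv top x y →
    Tendsto (fun n => dist (x n) (x' n)) atTop (𝓝 (0 : ℝ)) → SumConv top x' y

variable [∀ n, MetricSpace (X n)] [MetricSpace Y]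

/-- A sequence `x n ∈ X n` is bounded if it stays at bounded distance from some
convergent sequence. -/
def ARBounded (τ : TopologicalSpace ((Σ n, X n) ⊕ Y)) (x : ∀ n, X n) : Prop :=
  ∃ (x' : ∀ n, X n) (y : Y), SumConv τ x' y ∧ ∃ R : ℝ, ∀ n, dist (x n) (x' n) ≤ R

/-- Weak convergence of a (bounded) sequence `x n ∈ X n` to `c ∈ Y` along an asymptotic
relation: for every sequence of geodesics `γₙ` in `Xₙ` converging to a geodesic `γ` in `Y`
with `γ 0 = c`, the projections of `x n` onto `γₙ` converge to `c`. -/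
def ARWeakConv (τ : TopologicalSpace ((Σ n, X n) ⊕ Y)) (x : ∀ n, X n) (c : Y) : Prop :=
  ∀ (γn : ∀ n, ℝ → X n) (γ : ℝ → Y),
    (∀ n, IsGeodesic (γn n)) → IsGeodesic γ → γ 0 = c →
    SumConv τ (fun n => γn n 0) (γ 0) → SumConv τ (fun n => γn n 1) (γ 1) →
    ∀ p : ∀ n, X n, (∀ n, IsProjPt ((γn n) '' Set.Icc (0:ℝ) 1) (x n) (p n)) →
    SumConv τ p c

/-- Mosco convergence of functions `fn : X n → (−∞,∞]` to `f : Y → (−∞,∞]` along an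
asymptotic relation. -/
def ARMosco (τ : TopologicalSpace ((Σ n, X n) ⊕ Y))
    (fn : ∀ n, X n → EReal) (f : Y → EReal) : Prop :=
  (∀ (c : Y) (x : ∀ n, X n), ARBounded τ x → ARWeakConv τ x c →
      f c ≤ liminf (fun n => fn n (x n)) atTop) ∧
  (∀ c : Y, ∃ y : ∀ n, X n, SumConv τ y c ∧
      Tendsto (fun n => fn n (y n)) atTop (𝓝 (f c)))

end AsymptoticRelation

/-- A real-valued function on filters that is monotone and bounded below is constant below some
countably generated filter. -/
theorem exists_filter_forall_le_eq {α : Type*} (r : Filter α → ℝ) (F₀ : Filter α)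
    [F₀.NeBot] [F₀.IsCountablyGenerated]
    (hmono : ∀ F G : Filter α, F.NeBot → F ≤ G → G ≤ F₀ → r F ≤ r G)
    (hnonneg : ∀ F : Filter α, F.NeBot → 0 ≤ r F) :
    ∃ F ≤ F₀, F.NeBot ∧ F.IsCountablyGenerated ∧
      ∀ G ≤ F, G.NeBot → G.IsCountablyGenerated → r G = r F := by
  let T := {F : Filter α // F ≤ F₀ ∧ F.NeBot ∧ F.IsCountablyGenerated}
  let s : T → ℝ := fun F => sInf ((fun G : T => r G.1) '' {G | G.1 ≤ F.1})
  have hs : ∀ F G : T, G.1 ≤ F.1 → s F ≤ r G.1 := by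
    intro F G hGF
    refine csInf_le ⟨0, ?_⟩ ⟨G, hGF, rfl⟩
    rintro _ ⟨K, -, rfl⟩
    exact hnonneg _ K.2.2.1
  have hstep : ∀ (k : ℕ) (F : T), ∃ G : T, G.1 ≤ F.1 ∧ r G.1 < s F + 1 / ((k : ℝ) + 1) := by
    intro k F
    have hlt : s F < s F + 1 / ((k : ℝ) + 1) := lt_add_of_pos_right _ Nat.one_div_pos_of_nat
    obtain ⟨_, ⟨G, hG, rfl⟩, hr⟩ :=
      exists_lt_of_csInf_lt (Set.Nonempty.image _ ⟨F, le_refl F.1⟩) hlt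
    exact ⟨G, hG, hr⟩
  choose next hnext_le hnext_lt using hstep
  let Φ : ℕ → T := fun k => Nat.rec ⟨F₀, le_rfl, inferInstance, inferInstance⟩ next k
  have hΦ : Antitone fun k => (Φ k).1 := antitone_nat_of_succ_le fun k => hnext_le k (Φ k)
  have hne : (⨅ k, (Φ k).1).NeBot := by
    have : Nonempty α := F₀.nonempty_of_neBot
    exact iInf_neBot_of_directed hΦ.directed_ge fun k => (Φ k).2.2.1
  have hcg : (⨅ k, (Φ k).1).IsCountablyGenerated := by
    have := fun k => (Φ k).2.2.2
    infer_instance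
  have hle : (⨅ k, (Φ k).1) ≤ F₀ := iInf_le _ 0
  refine ⟨⨅ k, (Φ k).1, hle, hne, hcg, fun G hG hGne hGcg => ?_⟩
  refine le_antisymm (hmono _ _ hGne hG hle) ?_
  have hbound : ∀ k : ℕ, r (⨅ k, (Φ k).1) ≤ r G + 1 / ((k : ℝ) + 1) := by
    intro k
    have h₁ := hs (Φ k) ⟨G, hG.trans hle, hGne, hGcg⟩ (hG.trans (iInf_le _ k))
    have h₂ := hnext_lt k (Φ k)
    have h₃ := hmono _ _ hne (iInf_le (fun k => (Φ k).1) (k + 1)) (Φ (k + 1)).2.1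
    exact h₃.trans (h₂.le.trans (by simpa using h₁))
  have hlim : Tendsto (fun k : ℕ => r G + 1 / ((k : ℝ) + 1)) atTop (𝓝 (r G + 0)) :=
    tendsto_const_nhds.add tendsto_one_div_add_atTop_nhds_zero_nat
  simpa using ge_of_tendsto' hlim hbound

/-- A countably generated filter finer than `atTop` contains the tail filter of an infinite set. -/
theorem exists_set_atTop_inf_principal_le (F : Filter ℕ) [F.NeBot] [F.IsCountablyGenerated]
    (hF : F ≤ atTop) : ∃ S : Set ℕ, (atTop ⊓ 𝓟 S).NeBot ∧ atTop ⊓ 𝓟 S ≤ F := by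
  obtain ⟨φ, hφ⟩ := exists_seq_tendsto F
  refine ⟨Set.range φ, ?_, fun U hU => ?_⟩
  · have hle : map φ atTop ≤ atTop ⊓ 𝓟 (Set.range φ) :=
      le_inf (hφ.mono_right hF) (by simp)
    exact NeBot.mono inferInstance hle
  · obtain ⟨K, hK⟩ := eventually_atTop.1 (hφ hU)
    have hlarge : ∀ᶠ n in atTop, ∀ k < K, φ k < n :=
      (Set.finite_lt_nat K).eventually_all.2 fun k _ => eventually_gt_atTop (φ k)
    change ∀ᶠ n in atTop ⊓ 𝓟 (Set.range φ), n ∈ U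
    rw [eventually_inf_principal]
    filter_upwards [hlarge] with n hn
    rintro ⟨k, rfl⟩
    exact hK k (not_lt.1 fun h => lt_irrefl _ (hn k h))

section Geodesics

variable {X : Type*} [MetricSpace X]

theorem IsGeodesic.dist_zero {γ : ℝ → X} (hγ : IsGeodesic γ) {t : ℝ}
    (ht : t ∈ Set.Icc (0:ℝ) 1) : dist (γ 0) (γ t) = t * dist (γ 0) (γ 1) := by
  rw [hγ 0 (by simp) t ht, zero_sub, abs_neg, abs_of_nonneg ht.1]

theorem IsGeodesic.continuousOn {γ : ℝ → X} (hγ : IsGeodesic γ) :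
    ContinuousOn γ (Set.Icc (0:ℝ) 1) := by
  have hL : LipschitzOnWith (nndist (γ 0) (γ 1)) γ (Set.Icc (0:ℝ) 1) := by
    refine LipschitzOnWith.of_dist_le_mul fun s hs t ht => ?_
    rw [hγ s hs t ht, Real.dist_eq, coe_nndist, mul_comm]
  exact hL.continuousOn

theorem IsGeodesic.exists_isProjPt {γ : ℝ → X} (hγ : IsGeodesic γ) (x : X) :
    ∃ p, IsProjPt (γ '' Set.Icc (0:ℝ) 1) x p := by
  obtain ⟨p, hp, hmin⟩ := (isCompact_Icc.image_of_continuousOn hγ.continuousOn).exists_isMinOn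
    ⟨γ 0, Set.mem_image_of_mem γ (by simp)⟩
    (f := fun y => dist x y) (by fun_prop)
  exact ⟨p, hp, fun c hc => hmin hc⟩

/-- The final piece of a geodesic, reparametrized to `[0,1]`, is a geodesic. -/
theorem IsGeodesic.tail {γ : ℝ → X} (hγ : IsGeodesic γ) {s : ℝ} (hs : s ∈ Set.Icc (0:ℝ) 1) :
    IsGeodesic fun u => γ ((1 - u) * s + u) := by
  have hmem : ∀ u ∈ Set.Icc (0:ℝ) 1, (1 - u) * s + u ∈ Set.Icc (0:ℝ) 1 := by
    rintro u ⟨h0, h1⟩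
    exact ⟨by nlinarith [hs.1], by nlinarith [hs.2]⟩
  intro u hu v hv
  rw [hγ _ (hmem u hu) _ (hmem v hv), hγ _ (hmem 0 (by simp)) _ (hmem 1 (by simp))]
  rw [show (1 - u) * s + u - ((1 - v) * s + v) = (u - v) * (1 - s) by ring, abs_mul,
    show (1 - 0) * s + 0 - ((1 - 1) * s + 1) = -(1 - s) by ring, abs_neg]
  ring

/-- Projecting onto a geodesic does not increase the distance to its endpoint. -/
theorem HadamardSpace.dist_proj_le [CompleteSpace X] (hX : HadamardSpace X) {γ : ℝ → X}
    (hγ : IsGeodesic γ) {q p : X} (hp : IsProjPt (γ '' Set.Icc (0:ℝ) 1) q p) :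
    dist p (γ 1) ≤ dist q (γ 1) := by
  obtain ⟨⟨s, hs, rfl⟩, hmin⟩ := hp
  have hbound : ∀ u ∈ Set.Ioc (0:ℝ) 1,
      (1 - u) * dist (γ s) (γ 1) ^ 2 ≤ dist q (γ 1) ^ 2 := by
    rintro u ⟨h0, h1⟩
    have hcat := hX.cat0 q _ (hγ.tail hs) u ⟨h0.le, h1⟩
    simp only [sub_zero, one_mul, add_zero, sub_self, zero_mul, zero_add] at hcat
    have hle := hmin (γ ((1 - u) * s + u))
      ⟨_, ⟨by nlinarith [hs.1], by nlinarith [hs.2]⟩, rfl⟩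
    have hsq : dist q (γ s) ^ 2 ≤ dist q (γ ((1 - u) * s + u)) ^ 2 := by gcongr
    have hmul : u * ((1 - u) * dist (γ s) (γ 1) ^ 2) ≤ u * dist q (γ 1) ^ 2 := by
      nlinarith [mul_nonneg h0.le (sq_nonneg (dist q (γ s)))]
    exact le_of_mul_le_mul_left hmul h0
  have hlim : Tendsto (fun u : ℝ => (1 - u) * dist (γ s) (γ 1) ^ 2) (𝓝[>] 0)
      (𝓝 ((1 - 0) * dist (γ s) (γ 1) ^ 2)) := by
    refine Tendsto.mono_left (Continuous.tendsto ?_ 0) nhdsWithin_le_nhds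
    fun_prop
  have hsq : (1 - 0) * dist (γ s) (γ 1) ^ 2 ≤ dist q (γ 1) ^ 2 :=
    le_of_tendsto hlim (by
      filter_upwards [Ioc_mem_nhdsGT (zero_lt_one' ℝ)] with u hu using hbound u hu)
  exact le_of_sq_le_sq (by simpa using hsq) dist_nonneg

/-- Convexity along a geodesic with finite endpoint values, in terms of real numbers. -/
theorem ConvexFun.exists_real_le {f : X → EReal} (hf : ConvexFun f) (hbot : ∀ x, f x ≠ ⊥)
    {γ : ℝ → X} (hγ : IsGeodesic γ) {a b : ℝ} (ha : f (γ 0) = a) (hb : f (γ 1) = b) {t : ℝ}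
    (ht : t ∈ Set.Icc (0:ℝ) 1) : ∃ m : ℝ, f (γ t) = m ∧ m ≤ (1 - t) * a + t * b := by
  have h := hf γ hγ t ht
  rw [ha, hb] at h
  norm_cast at h
  have htop : f (γ t) ≠ ⊤ := ne_top_of_le_ne_top (EReal.coe_ne_top _) h
  lift f (γ t) to ℝ using ⟨htop, hbot _⟩ with m
  exact ⟨m, rfl, by exact_mod_cast h⟩

/-- Quadratic growth of `f + d(x,·)²/(2λ)` away from its minimizer. -/
theorem IsResolventPt.quadratic_growth [CompleteSpace X] (hX : HadamardSpace X) {f : X → EReal}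
    (hf : ConvexFun f) (hbot : ∀ x, f x ≠ ⊥) {lam : ℝ} (hlam : 0 < lam) {x p y : X}
    (hp : IsResolventPt f lam x p) {a b : ℝ} (ha : f p = a) (hb : f y = b) :
    a + dist x p ^ 2 / (2 * lam) + dist y p ^ 2 / (4 * lam)
      ≤ b + dist x y ^ 2 / (2 * lam) := by
  obtain ⟨γ, hγ, rfl, rfl⟩ := hX.geodesic y p
  have hhalf : (1 / 2 : ℝ) ∈ Set.Icc (0:ℝ) 1 := ⟨by norm_num, by norm_num⟩
  obtain ⟨m, hm, hmle⟩ := hf.exists_real_le hbot hγ hb ha hhalf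
  have hcat := hX.cat0 x γ hγ _ hhalf
  have hmin := hp (γ (1 / 2))
  rw [ha, hm] at hmin
  norm_cast at hmin
  have hdiv : dist x (γ (1 / 2)) ^ 2 / (2 * lam) ≤ (1 / 2) * (dist x (γ 0) ^ 2 / (2 * lam))
      + (1 / 2) * (dist x (γ 1) ^ 2 / (2 * lam)) - (1 / 2) * (dist (γ 0) (γ 1) ^ 2 / (4 * lam)) := by
    calc dist x (γ (1 / 2)) ^ 2 / (2 * lam)
        ≤ ((1 - 1 / 2) * dist x (γ 0) ^ 2 + 1 / 2 * dist x (γ 1) ^ 2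
          - 1 / 2 * (1 - 1 / 2) * dist (γ 0) (γ 1) ^ 2) / (2 * lam) := by gcongr
      _ = _ := by field_simp; ring
  linarith

/-- Moving from `y` a distance `ε` towards the minimizer of `f + d(x,·)²/(2λ)` decreases this
function by at least `ε² / (4λ)`. -/
theorem IsResolventPt.exists_decrease [CompleteSpace X] (hX : HadamardSpace X) {f : X → EReal}
    (hf : ConvexFun f) (hbot : ∀ x, f x ≠ ⊥) {lam : ℝ} (hlam : 0 < lam) {x p y : X}
    (hp : IsResolventPt f lam x p) {a b : ℝ} (ha : f p = a) (hb : f y = b) {ε : ℝ} (hε : 0 < ε)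
    (hεd : ε ≤ dist y p) :
    ∃ (z : X) (m : ℝ), dist z y ≤ ε ∧ f z = m ∧
      m + dist x z ^ 2 / (2 * lam) ≤ b + dist x y ^ 2 / (2 * lam) - ε ^ 2 / (4 * lam) := by
  have hgrowth := hp.quadratic_growth hX hf hbot hlam ha hb
  obtain ⟨γ, hγ, rfl, rfl⟩ := hX.geodesic y p
  have hd : 0 < dist (γ 0) (γ 1) := hε.trans_le hεd
  have ht : ε / dist (γ 0) (γ 1) ∈ Set.Icc (0:ℝ) 1 :=
    ⟨by positivity, (div_le_one hd).2 hεd⟩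
  have htd : ε / dist (γ 0) (γ 1) * dist (γ 0) (γ 1) = ε := div_mul_cancel₀ _ hd.ne'
  obtain ⟨m, hm, hmle⟩ := hf.exists_real_le hbot hγ hb ha ht
  have hdist := hγ.dist_zero ht
  have hcat := hX.cat0 x γ hγ _ ht
  generalize ε / dist (γ 0) (γ 1) = t at *
  refine ⟨γ t, m, by rw [dist_comm, hdist, htd], hm, ?_⟩
  have hdiv : dist x (γ t) ^ 2 / (2 * lam) ≤ (1 - t) * (dist x (γ 0) ^ 2 / (2 * lam))
      + t * (dist x (γ 1) ^ 2 / (2 * lam)) := by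
    have hle : dist x (γ t) ^ 2 ≤ (1 - t) * dist x (γ 0) ^ 2 + t * dist x (γ 1) ^ 2 := by
      have := mul_nonneg (mul_nonneg ht.1 (sub_nonneg.2 ht.2)) (sq_nonneg (dist (γ 0) (γ 1)))
      linarith
    calc dist x (γ t) ^ 2 / (2 * lam)
        ≤ ((1 - t) * dist x (γ 0) ^ 2 + t * dist x (γ 1) ^ 2) / (2 * lam) := by gcongr
      _ = _ := by ring
  have hmul := mul_le_mul_of_nonneg_left hgrowth ht.1
  have hεle : ε ^ 2 / (4 * lam) ≤ t * (dist (γ 0) (γ 1) ^ 2 / (4 * lam)) := by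
    calc ε ^ 2 / (4 * lam) ≤ ε * dist (γ 0) (γ 1) / (4 * lam) := by
          rw [sq]; gcongr
      _ = t * (dist (γ 0) (γ 1) ^ 2 / (4 * lam)) := by rw [← htd]; ring
  nlinarith

/-- A minimizer of `f + d(x,·)²/(2λ)` lies in the domain of a proper function `f`. -/
theorem IsResolventPt.ne_top_s19 {f : X → EReal} (hf : ∃ x, f x ≠ ⊤) {lam : ℝ} {x p : X}
    (hp : IsResolventPt f lam x p) : f p ≠ ⊤ := by
  obtain ⟨z, hz⟩ := hf
  intro htop
  have h := hp z
  rw [htop, EReal.top_add_coe, top_le_iff] at h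
  exact EReal.add_ne_top hz (EReal.coe_ne_top _) h

theorem IsResolventPt.moreauEnv_eq {f : X → EReal} {lam : ℝ} {x p : X}
    (hp : IsResolventPt f lam x p) :
    MoreauEnv f lam x = f p + ((dist x p ^ 2 / (2 * lam) : ℝ) : EReal) :=
  le_antisymm (iInf_le _ p) (le_iInf hp)

end Geodesics

section WeakCompactness

variable {X : ℕ → Type*} [∀ n, MetricSpace (X n)] {Y : Type*} [MetricSpace Y]

/-- Points at a fixed parameter on converging geodesics converge. -/
theorem AsymptoticRelation.sumConv_geodesic [∀ n, CompleteSpace (X n)]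
    (A : AsymptoticRelation X Y) (hX : ∀ n, HadamardSpace (X n))
    {γn : ∀ n, ℝ → X n} {γ : ℝ → Y} (hγn : ∀ n, IsGeodesic (γn n)) (hγ : IsGeodesic γ)
    (h0 : SumConv A.top (fun n => γn n 0) (γ 0)) (h1 : SumConv A.top (fun n => γn n 1) (γ 1))
    {t : ℝ} (ht : t ∈ Set.Icc (0:ℝ) 1) : SumConv A.top (fun n => γn n t) (γ t) := by
  obtain ⟨w, hw⟩ := A.exists_approx (γ t)
  refine A.conv_of_dist_tendsto_zero w _ _ hw ?_
  have hlim := ((((A.dist_conv _ _ _ _ hw h0).pow 2).const_mul (1 - t)).add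
    (((A.dist_conv _ _ _ _ hw h1).pow 2).const_mul t)).sub
    (((A.dist_conv _ _ _ _ h0 h1).pow 2).const_mul (t * (1 - t)))
  have hzero : (1 - t) * dist (γ t) (γ 0) ^ 2 + t * dist (γ t) (γ 1) ^ 2
      - t * (1 - t) * dist (γ 0) (γ 1) ^ 2 = 0 := by
    rw [hγ t ht 0 (by simp), hγ t ht 1 (by simp), mul_pow, mul_pow, sq_abs, sq_abs]
    ring
  rw [hzero] at hlim
  have hsq : Tendsto (fun n => dist (w n) (γn n t) ^ 2) atTop (𝓝 0) :=
    squeeze_zero (fun n => sq_nonneg _) (fun n => (hX n).cat0 _ _ (hγn n) t ht) hlim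
  simpa [Real.sqrt_sq dist_nonneg] using hsq.sqrt

/-- Strong convergence implies weak convergence. -/
theorem AsymptoticRelation.weakConv_of_sumConv (A : AsymptoticRelation X Y) {x : ∀ n, X n}
    {c : Y} (hx : SumConv A.top x c) : ARWeakConv A.top x c := by
  intro γn γ _ _ hc h0 _ p hp
  rw [hc] at h0
  refine A.conv_of_dist_tendsto_zero x p c hx ?_
  have hlim := A.dist_conv _ _ _ _ hx h0
  rw [dist_self] at hlim
  exact squeeze_zero (fun n => dist_nonneg)
    (fun n => (hp n).2 _ (Set.mem_image_of_mem _ (by simp))) hlim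

theorem AsymptoticRelation.bounded_of_sumConv (A : AsymptoticRelation X Y) {x : ∀ n, X n}
    {c : Y} (hx : SumConv A.top x c) : ARBounded A.top x :=
  ⟨x, c, hx, 0, fun _ => (dist_self _).le⟩

/-- Along the filter `F`, the points `p n` are eventually at distance less than `ρ` from some
convergent sequence. -/
def AsymptoticRelation.HasRadius (A : AsymptoticRelation X Y) (p : ∀ n, X n) (F : Filter ℕ)
    (ρ : ℝ) : Prop :=
  ∃ (y : Y) (yn : ∀ n, X n), SumConv A.top yn y ∧ ∀ᶠ n in F, dist (p n) (yn n) < ρ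

/-- Near-centers of a sequence whose radius along `G` is at least `r` are close to each other. -/
theorem AsymptoticRelation.sq_dist_le_of_eventually_dist_lt [∀ n, CompleteSpace (X n)]
    [CompleteSpace Y] (A : AsymptoticRelation X Y) (hX : ∀ n, HadamardSpace (X n))
    (hY : HadamardSpace Y) {p : ∀ n, X n} {G : Filter ℕ} [G.NeBot] (hG : G ≤ atTop) {r ρ : ℝ}
    (hr0 : 0 ≤ r) (hr : ∀ ρ' < r, ¬ A.HasRadius p G ρ') {y z : Y} {yn zn : ∀ n, X n}
    (hy : SumConv A.top yn y) (hz : SumConv A.top zn z)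
    (hpy : ∀ᶠ n in G, dist (p n) (yn n) < ρ) (hpz : ∀ᶠ n in G, dist (p n) (zn n) < ρ) :
    dist y z ^ 2 ≤ 4 * (ρ ^ 2 - r ^ 2) := by
  by_contra! hlt
  choose γn hγn hγn0 hγn1 using fun n => (hX n).geodesic (yn n) (zn n)
  obtain ⟨γ, hγ, hγ0, hγ1⟩ := hY.geodesic y z
  have hhalf : (1 / 2 : ℝ) ∈ Set.Icc (0:ℝ) 1 := ⟨by norm_num, by norm_num⟩
  have hmid : SumConv A.top (fun n => γn n (1 / 2)) (γ (1 / 2)) :=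
    A.sumConv_geodesic hX hγn hγ (by simpa only [hγn0, hγ0] using hy)
      (by simpa only [hγn1, hγ1] using hz) hhalf
  obtain ⟨κ, hκ1, hκ2⟩ : ∃ κ, ρ ^ 2 - dist y z ^ 2 / 4 < κ ∧ κ < r ^ 2 :=
    exists_between (by linarith)
  have hdist : ∀ᶠ n in G, ρ ^ 2 - dist (yn n) (zn n) ^ 2 / 4 < κ :=
    ((((A.dist_conv _ _ _ _ hy hz).mono_left hG).pow 2).div_const 4).const_sub (ρ ^ 2)
      |>.eventually_lt_const hκ1
  have hsq : ∀ᶠ n in G, dist (p n) (γn n (1 / 2)) ^ 2 < κ := by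
    filter_upwards [hdist, hpy, hpz] with n h₁ h₂ h₃
    have hcat := (hX n).cat0 (p n) _ (hγn n) _ hhalf
    rw [hγn0, hγn1] at hcat
    have h₂' : dist (p n) (yn n) ^ 2 < ρ ^ 2 := by gcongr
    have h₃' : dist (p n) (zn n) ^ 2 < ρ ^ 2 := by gcongr
    linarith
  obtain ⟨n, hn⟩ := hsq.exists
  have hrpos : 0 < r := by
    refine lt_of_le_of_ne hr0 fun h => ?_
    rw [← h] at hκ2
    nlinarith [sq_nonneg (dist (p n) (γn n (1 / 2)))]
  refine hr (√κ) ((Real.sqrt_lt' hrpos).2 hκ2) ⟨_, _, hmid, ?_⟩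
  filter_upwards [hsq] with n hn
  exact Real.lt_sqrt_of_sq_lt hn

/-- A sequence with radius `r` along `F`, and not less than `r`, has an asymptotic center. -/
theorem AsymptoticRelation.exists_center [∀ n, CompleteSpace (X n)]
    [CompleteSpace Y] (A : AsymptoticRelation X Y) (hX : ∀ n, HadamardSpace (X n))
    (hY : HadamardSpace Y) {p : ∀ n, X n} {F : Filter ℕ} [F.NeBot] (hF : F ≤ atTop) {r : ℝ}
    (hr0 : 0 ≤ r) (hr : ∀ ρ < r, ¬ A.HasRadius p F ρ) (hr' : ∀ ρ > r, A.HasRadius p F ρ) :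
    ∃ c : Y, ∀ cn, SumConv A.top cn c → ∀ ρ > r, ∀ᶠ n in F, dist (p n) (cn n) < ρ := by
  have hpos : ∀ k : ℕ, r < r + 1 / ((k : ℝ) + 1) := fun k =>
    lt_add_of_pos_right _ Nat.one_div_pos_of_nat
  choose y yn hyn hpy using fun k : ℕ => hr' _ (hpos k)
  have hlim : Tendsto (fun k : ℕ => r + 1 / ((k : ℝ) + 1)) atTop (𝓝 (r + 0)) :=
    tendsto_const_nhds.add tendsto_one_div_add_atTop_nhds_zero_nat
  rw [add_zero] at hlim
  have hcauchy : CauchySeq y := by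
    refine cauchySeq_of_le_tendsto_0 (fun k : ℕ => √(4 * ((r + 1 / ((k : ℝ) + 1)) ^ 2 - r ^ 2)))
      (fun m n N hm hn => ?_) ?_
    · refine Real.le_sqrt_of_sq_le (A.sq_dist_le_of_eventually_dist_lt hX hY hF hr0 hr
        (hyn m) (hyn n) ?_ ?_)
      · filter_upwards [hpy m] with i hi
        exact hi.trans_le (by gcongr)
      · filter_upwards [hpy n] with i hi
        exact hi.trans_le (by gcongr)
    · have hsqrt := (((hlim.pow 2).sub_const (r ^ 2)).const_mul 4).sqrt
      rwa [sub_self, mul_zero, Real.sqrt_zero] at hsqrt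
  obtain ⟨c, hc⟩ := cauchySeq_tendsto_of_complete hcauchy
  refine ⟨c, fun cn hcn ρ hρ => ?_⟩
  have hsum : Tendsto (fun k : ℕ => r + 1 / ((k : ℝ) + 1) + dist (y k) c) atTop (𝓝 (r + 0)) :=
    hlim.add (tendsto_iff_dist_tendsto_zero.1 hc)
  rw [add_zero] at hsum
  obtain ⟨k, hk⟩ := (hsum.eventually_lt_const hρ).exists
  have hdist := ((A.dist_conv _ _ _ _ (hyn k) hcn).mono_left hF).eventually_lt_const
    (show dist (y k) c < ρ - (r + 1 / ((k : ℝ) + 1)) by linarith)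
  filter_upwards [hdist, hpy k] with n h₁ h₂
  linarith [dist_triangle (p n) (yn k n) (cn n)]

/-- Weak sequential compactness: a sequence that is bounded along `F` agrees along a finer filter
with a bounded weakly convergent sequence. -/
theorem AsymptoticRelation.exists_weakConv [∀ n, CompleteSpace (X n)]
    [CompleteSpace Y] (A : AsymptoticRelation X Y) (hX : ∀ n, HadamardSpace (X n))
    (hY : HadamardSpace Y) {p x' : ∀ n, X n} {y : Y} (hx' : SumConv A.top x' y) {R : ℝ}
    (F₀ : Filter ℕ) [F₀.NeBot] [F₀.IsCountablyGenerated] (hF₀ : F₀ ≤ atTop)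
    (hR : ∀ n, dist (p n) (x' n) ≤ R) :
    ∃ (c : Y) (q : ∀ n, X n) (G : Filter ℕ), G.NeBot ∧ G ≤ F₀ ∧ (∀ᶠ n in G, q n = p n) ∧
      ARBounded A.top q ∧ ARWeakConv A.top q c := by
  have hne : ∀ F : Filter ℕ, {ρ | A.HasRadius p F ρ}.Nonempty := fun F =>
    ⟨R + 1, y, x', hx', Eventually.of_forall fun n => (hR n).trans_lt (lt_add_one R)⟩
  have hlow : ∀ F : Filter ℕ, F.NeBot → ∀ ρ, A.HasRadius p F ρ → 0 ≤ ρ := by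
    rintro F hF ρ ⟨z, zn, -, hz⟩
    obtain ⟨n, hn⟩ := hz.exists
    exact dist_nonneg.trans hn.le
  obtain ⟨F, hFle, hFne, hFcg, hFr⟩ :=
    exists_filter_forall_le_eq (fun F => sInf {ρ | A.HasRadius p F ρ}) F₀
      (fun F G hF hFG _ => csInf_le_csInf ⟨0, hlow F hF⟩ (hne G)
        fun ρ ⟨z, zn, hz, h⟩ => ⟨z, zn, hz, h.filter_mono hFG⟩)
      (fun F hF => le_csInf (hne F) (hlow F hF))
  have hFtop : F ≤ atTop := hFle.trans hF₀
  set r := sInf {ρ | A.HasRadius p F ρ}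
  have hr0 : 0 ≤ r := le_csInf (hne F) (hlow F hFne)
  have hr : ∀ G ≤ F, G.NeBot → G.IsCountablyGenerated → ∀ ρ < r, ¬ A.HasRadius p G ρ := by
    intro G hG hGne hGcg ρ hρ h
    exact hρ.not_ge ((hFr G hG hGne hGcg).symm.le.trans (csInf_le ⟨0, hlow G hGne⟩ h))
  have hr' : ∀ ρ > r, A.HasRadius p F ρ := by
    intro ρ hρ
    obtain ⟨ρ', ⟨z, zn, hz, h⟩, hlt⟩ := exists_lt_of_csInf_lt (hne F) hρ
    exact ⟨z, zn, hz, h.mono fun n hn => hn.trans hlt⟩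
  obtain ⟨c, hc⟩ := A.exists_center hX hY hFtop hr0 (hr F le_rfl hFne hFcg) hr'
  obtain ⟨cn, hcn⟩ := A.exists_approx c
  obtain ⟨S, hSne, hSF⟩ := exists_set_atTop_inf_principal_le F hFtop
  refine ⟨c, fun n => if n ∈ S then p n else cn n, atTop ⊓ 𝓟 S, hSne, hSF.trans hFle, ?_, ?_, ?_⟩
  · rw [eventually_inf_principal]
    exact Eventually.of_forall fun n hn => if_pos hn
  · obtain ⟨M, hM⟩ := (A.dist_conv _ _ _ _ hcn hx').bddAbove_range
    refine ⟨x', y, hx', max R M, fun n => ?_⟩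
    dsimp only
    split_ifs
    · exact (hR n).trans (le_max_left _ _)
    · exact (hM (Set.mem_range_self n)).trans (le_max_right _ _)
  · intro γn γ hγn hγ hγc h0 h1 P hP
    have hγ0 : SumConv A.top (fun n => γn n 0) c := hγc ▸ h0
    refine A.conv_of_dist_tendsto_zero cn P c hcn ?_
    have hc0 := A.dist_conv _ _ _ _ hcn hγ0
    rw [dist_self] at hc0
    have hoff : ∀ ε > 0, ∀ᶠ n in atTop, n ∉ S → dist (cn n) (P n) < ε := by
      intro ε hε
      filter_upwards [hc0.eventually_lt_const hε] with n hn hnS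
      have hle := (hP n).2 (γn n 0) (Set.mem_image_of_mem _ (by simp))
      simp only [if_neg hnS] at hle
      exact hle.trans_lt hn
    have hon : ∀ ε > 0, ∀ᶠ n in atTop ⊓ 𝓟 S, dist (cn n) (P n) < ε := by
      intro ε hε
      by_contra hcon
      rw [not_eventually] at hcon
      choose t ht htP using fun n => (hP n).1
      set G₀ : Filter ℕ := atTop ⊓ 𝓟 S ⊓ 𝓟 {n | ¬ dist (cn n) (P n) < ε}
      have hG₀ne : G₀.NeBot := frequently_iff_neBot.1 hcon
      obtain ⟨τ, hτ, hcl⟩ := isCompact_Icc (a := (0:ℝ)) (b := 1)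
        (f := map t G₀) (tendsto_principal.2 (Eventually.of_forall ht))
      set G : Filter ℕ := G₀ ⊓ comap t (𝓝 τ)
      have hGne : G.NeBot := by
        rw [← map_neBot_iff t, Filter.push_pull, inf_comm]
        exact hcl
      have hGcg : G.IsCountablyGenerated := inferInstance
      have hGS : G ≤ atTop ⊓ 𝓟 S := inf_le_left.trans inf_le_left
      have hGF : G ≤ F := hGS.trans hSF
      have hGtop : G ≤ atTop := hGF.trans hFtop
      have htτ : Tendsto t G (𝓝 τ) := tendsto_comap.mono_left inf_le_right
      have hγτ := A.sumConv_geodesic hX hγn hγ h0 h1 hτ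
      have hPτ : Tendsto (fun n => dist (P n) (γn n τ)) G (𝓝 0) := by
        have hlim := ((htτ.sub_const τ).abs).mul ((A.dist_conv _ _ _ _ h0 h1).mono_left hGtop)
        rw [sub_self, abs_zero, zero_mul] at hlim
        refine hlim.congr fun n => ?_
        rw [← htP n, hγn n _ (ht n) _ hτ]
      have hfar : ∀ ρ > r, dist c (γ τ) ^ 2 ≤ 4 * (ρ ^ 2 - r ^ 2) := by
        intro ρ hρ
        refine A.sq_dist_le_of_eventually_dist_lt hX hY hGtop hr0 (hr G hGF hGne hGcg) hcn hγτ
          ((hc cn hcn ρ hρ).filter_mono hGF) ?_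
        obtain ⟨σ, hσ1, hσ2⟩ := exists_between hρ
        have hmem : ∀ᶠ n in G, n ∈ S := hGS (mem_inf_of_right (mem_principal_self S))
        filter_upwards [(hc _ hγ0 σ hσ1).filter_mono hGF,
          hPτ.eventually_lt_const (sub_pos.2 hσ2), hmem] with n h₁ h₂ h₃
        have hle := (hP n).2 (γn n 0) (Set.mem_image_of_mem _ (by simp))
        simp only [if_pos h₃] at hle
        linarith [dist_triangle (p n) (P n) (γn n τ)]
      have hzero : dist c (γ τ) = 0 := by
        have hlim : Tendsto (fun ρ : ℝ => 4 * (ρ ^ 2 - r ^ 2)) (𝓝[>] r)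
            (𝓝 (4 * (r ^ 2 - r ^ 2))) := by
          refine Tendsto.mono_left (Continuous.tendsto ?_ r) nhdsWithin_le_nhds
          fun_prop
        have hle := ge_of_tendsto hlim (eventually_mem_nhdsWithin.mono hfar)
        have := sq_nonneg (dist c (γ τ))
        exact pow_eq_zero_iff two_ne_zero |>.1 (by linarith)
      have hlim := ((A.dist_conv _ _ _ _ hcn hγτ).mono_left hGtop).add hPτ
      rw [hzero, add_zero] at hlim
      have hbad : ∀ᶠ n in G, ¬ dist (cn n) (P n) < ε :=
        mem_inf_of_left (mem_inf_of_right (mem_principal_self _))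
      obtain ⟨n, h₁, h₂⟩ := ((hlim.eventually_lt_const hε).and hbad).exists
      refine h₂ (lt_of_le_of_lt ?_ h₁)
      rw [dist_comm (P n)]
      exact dist_triangle _ _ _
    rw [Metric.tendsto_nhds]
    intro ε hε
    filter_upwards [hoff ε hε, eventually_inf_principal.1 (hon ε hε)] with n h₁ h₂
    rw [Real.dist_0_eq_abs, abs_of_nonneg dist_nonneg]
    by_cases hn : n ∈ S
    exacts [h₂ hn, h₁ hn]

end WeakCompactness

/-- Mosco convergence along an asymptotic relation between Hadamard spaces
implies convergence of Moreau–Yosida envelopes and of resolvents. -/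
theorem mosco_implies_resolvent_convergence_asymptotic_relation
    {Hn : ℕ → Type*} [∀ n, MetricSpace (Hn n)] [∀ n, CompleteSpace (Hn n)]
    {H : Type*} [MetricSpace H] [CompleteSpace H]
    (hHn : ∀ n, HadamardSpace (Hn n)) (hH : HadamardSpace H)
    (A : AsymptoticRelation Hn H)
    (f : H → EReal) (fn : ∀ n, Hn n → EReal)
    (hf : ProperConvexLsc f) (hfn : ∀ n, ProperConvexLsc (fn n))
    (x : H) (xn : ∀ n, Hn n) (hx : SumConv A.top xn x)
    (hM : ARMosco A.top fn f)
    (J : ℝ → H) (hJ : ∀ lam > (0:ℝ), IsResolventPt f lam x (J lam))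
    (Jn : ℝ → ∀ n, Hn n)
    (hJn : ∀ lam > (0:ℝ), ∀ n, IsResolventPt (fn n) lam (xn n) (Jn lam n)) :
    ∀ lam > (0:ℝ),
      Tendsto (fun n => MoreauEnv (fn n) lam (xn n)) atTop (𝓝 (MoreauEnv f lam x)) ∧
      SumConv A.top (Jn lam) (J lam) := by
  intro lam hlam
  obtain ⟨yn, hyn, hfyn⟩ := hM.2 (J lam)
  have hp := hJ lam hlam
  have hpn := hJn lam hlam
  set p := J lam
  set pn := Jn lam
  obtain ⟨a, ha⟩ : ∃ a : ℝ, f p = a :=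
    ⟨_, (EReal.coe_toReal (hp.ne_top_s19 hf.1) (hf.2.1 p)).symm⟩
  have han : ∀ n, ∃ a : ℝ, fn n (pn n) = a := fun n =>
    ⟨_, (EReal.coe_toReal ((hpn n).ne_top_s19 (hfn n).1) ((hfn n).2.1 _)).symm⟩
  choose an han using han
  rw [ha] at hfyn
  have hbn : ∀ᶠ n in atTop, fn n (yn n) = ((fn n (yn n)).toReal : EReal) := by
    filter_upwards [hfyn.eventually_lt_const (EReal.coe_lt_top a)] with n hn
    exact (EReal.coe_toReal hn.ne ((hfn n).2.1 _)).symm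
  set bn : ℕ → ℝ := fun n => (fn n (yn n)).toReal
  have hbn_lim : Tendsto bn atTop (𝓝 a) :=
    (EReal.tendsto_toReal (EReal.coe_ne_top a) (EReal.coe_ne_bot a)).comp hfyn
  have hFyn : Tendsto (fun n => bn n + dist (xn n) (yn n) ^ 2 / (2 * lam)) atTop
      (𝓝 (a + dist x p ^ 2 / (2 * lam))) :=
    hbn_lim.add (((A.dist_conv _ _ _ _ hx hyn).pow 2).div_const _)
  have hdist : Tendsto (fun n => dist (yn n) (pn n)) atTop (𝓝 0) := by
    rw [Metric.tendsto_nhds]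
    intro ε hε
    by_contra hcon
    have hfreq : ∃ᶠ n in atTop, fn n (yn n) = bn n ∧ ε ≤ dist (yn n) (pn n) := by
      refine ((not_eventually.1 hcon).and_eventually hbn).mono fun n hn => ⟨hn.2, ?_⟩
      simpa [abs_of_nonneg] using hn.1
    have hz : ∀ n, ∃ z : Hn n, dist z (yn n) ≤ ε ∧
        (fn n (yn n) = bn n ∧ ε ≤ dist (yn n) (pn n) → ∃ m : ℝ, fn n z = m ∧
          m + dist (xn n) z ^ 2 / (2 * lam)
            ≤ bn n + dist (xn n) (yn n) ^ 2 / (2 * lam) - ε ^ 2 / (4 * lam)) := by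
      intro n
      by_cases h : fn n (yn n) = bn n ∧ ε ≤ dist (yn n) (pn n)
      · obtain ⟨z, m, h₁, h₂, h₃⟩ := (hpn n).exists_decrease (hHn n) (hfn n).2.2.1 (hfn n).2.1
          hlam (han n) h.1 hε h.2
        exact ⟨z, h₁, fun _ => ⟨m, h₂, h₃⟩⟩
      · exact ⟨yn n, by simpa using hε.le, fun h' => absurd h' h⟩
    choose zn hzn hzn_val using hz
    have : (atTop ⊓ 𝓟 {n | fn n (yn n) = bn n ∧ ε ≤ dist (yn n) (pn n)}).NeBot :=
      frequently_iff_neBot.1 hfreq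
    obtain ⟨c, q, G, hGne, hGle, hqz, hqb, hqw⟩ := A.exists_weakConv hHn hH hyn
      (atTop ⊓ 𝓟 {n | fn n (yn n) = bn n ∧ ε ≤ dist (yn n) (pn n)}) inf_le_left hzn
    have hliminf := hM.1 c q hqb hqw
    set η : ℝ := ε ^ 2 / (4 * lam) / 3 with hη
    have hηpos : 0 < η := by positivity
    have hlow : ∀ᶠ n in atTop,
        ((a + dist x p ^ 2 / (2 * lam) - dist x c ^ 2 / (2 * lam) - η : ℝ) : EReal)
          < fn n (q n) := by
      refine eventually_lt_of_lt_liminf (lt_of_lt_of_le ?_ hliminf)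
      have hmin := hp c
      rw [ha] at hmin
      by_cases htop : f c = ⊤
      · rw [htop]
        exact EReal.coe_lt_top _
      · lift f c to ℝ using ⟨htop, hf.2.1 c⟩ with b
        norm_cast at hmin ⊢
        linarith
    obtain ⟨cn, hcn⟩ := A.exists_approx c
    choose γn hγn hγn0 hγn1 using fun n => (hHn n).geodesic (cn n) (xn n)
    obtain ⟨γ, hγ, hγ0, hγ1⟩ := hH.geodesic c x
    choose P hP using fun n => (hγn n).exists_isProjPt (q n)
    have hPc : SumConv A.top P c := hqw γn γ hγn hγ hγ0 (by simpa only [hγn0, hγ0] using hcn)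
      (by simpa only [hγn1, hγ1] using hx) P hP
    have hPlow : ∀ᶠ n in atTop,
        dist x c ^ 2 / (2 * lam) - η < dist (xn n) (P n) ^ 2 / (2 * lam) :=
      (((A.dist_conv _ _ _ _ hx hPc).pow 2).div_const _).eventually_const_lt
        (sub_lt_self _ hηpos)
    have hup := hFyn.eventually_lt_const (lt_add_of_pos_right _ hηpos)
    have hGtop : G ≤ atTop := hGle.trans inf_le_left
    have hmem : ∀ᶠ n in G, fn n (yn n) = bn n ∧ ε ≤ dist (yn n) (pn n) :=
      hGle (mem_inf_of_right (mem_principal_self _))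
    obtain ⟨n, h₁, h₂, h₃, h₄, h₅⟩ := (hmem.and (hqz.and
      ((hlow.filter_mono hGtop).and ((hPlow.filter_mono hGtop).and
        (hup.filter_mono hGtop))))).exists
    obtain ⟨m, hm, hmle⟩ := hzn_val n h₁
    have hproj := (hHn n).dist_proj_le (hγn n) (hP n)
    rw [h₂, hγn1, dist_comm, dist_comm (zn n)] at hproj
    have hsq : dist (xn n) (P n) ^ 2 / (2 * lam) ≤ dist (xn n) (zn n) ^ 2 / (2 * lam) := by
      gcongr
    rw [h₂, hm, EReal.coe_lt_coe_iff] at h₃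
    linarith
  have hconv : SumConv A.top pn p := A.conv_of_dist_tendsto_zero yn pn p hyn hdist
  refine ⟨?_, hconv⟩
  have hliminf := hM.1 p pn (A.bounded_of_sumConv hconv) (A.weakConv_of_sumConv hconv)
  have hdist_sq : Tendsto (fun n => dist (xn n) (pn n) ^ 2 / (2 * lam)) atTop
      (𝓝 (dist x p ^ 2 / (2 * lam))) :=
    ((A.dist_conv _ _ _ _ hx hconv).pow 2).div_const _
  have han_lim : Tendsto an atTop (𝓝 a) := by
    rw [ha] at hliminf
    refine tendsto_order.2 ⟨fun u hu => ?_, fun u hu => ?_⟩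
    · filter_upwards [eventually_lt_of_lt_liminf
        (lt_of_lt_of_le (EReal.coe_lt_coe_iff.2 hu) hliminf)] with n hn
      rwa [han n, EReal.coe_lt_coe_iff] at hn
    · have hlim := hFyn.sub hdist_sq
      rw [add_sub_cancel_right] at hlim
      filter_upwards [hlim.eventually_lt_const hu, hbn] with n h₁ h₂
      have hmin := hpn n (yn n)
      rw [han n, h₂] at hmin
      norm_cast at hmin
      linarith
  rw [hp.moreauEnv_eq, ha]
  simp_rw [fun n => (hpn n).moreauEnv_eq, han]
  exact_mod_cast han_lim.add hdist_sq
end
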